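/- Let A be a unital complex Banach algebra, let X be a complex Banach space, and let φ : A × A → X be a continuous ℂ-bilinear map such that φ(a,b) = 0 whenever a, b ∈ A satisfy ab = ba = 0. Then φ(a,x) + φ(x,a) = φ(ax, 1) + φ(1, xa) and φ(x,1) = φ(1,x) for every a ∈ A and every x in the norm closure of Im(A). In particular, if A equals the norm closure of Im(A), then φ(a,b) + φ(b,a) = φ(ab, 1) + φ(1, ba) and φ(a,1) = φ(1,a) for all a, b ∈ A. -/

import Mathlib

/-!
Let `p`, `q` be orthogonal idempotents. For `u` in the Peirce corner `p A q`, the elements `q - u`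
and `p + u` are orthogonal, and `u` is orthogonal to itself, so `φ (q - u) (p + u) = 0` says that
`φ u p = φ q u`. Taking `u = p a q` and discarding orthogonal terms gives the exchange rule
`φ (a q) p = φ q (p a)`. For an idempotent `x = p`, splitting `1 = p + (1 - p)` in every term of
the desired identity reduces it to two instances of this rule. Both sides are linear and continuous
in `x`, so the identity extends from idempotents to their closed span.
-/

section Bilinear

variable {R A X : Type*} [CommSemiring R] [AddCommGroup X] [Module R X]

/-- The bilinear map `φ` is zero at every pair of orthogonal elements, where orthogonality is the
two-sided condition `a * b = 0` and `b * a = 0`. This is the property that forces the values of `φ`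
at idempotents to be governed by its values at pairs containing `1`. -/
def VanishesOnOrthogonalPairs [NonUnitalRing A] [Module R A] (φ : A →ₗ[R] A →ₗ[R] X) : Prop :=
  ∀ a b : A, a * b = 0 → b * a = 0 → φ a b = 0

namespace VanishesOnOrthogonalPairs

section NonUnital

variable [NonUnitalRing A] [Module R A] {φ : A →ₗ[R] A →ₗ[R] X} {p q : A}

theorem apply_eq_apply_of_mem_corner (hφ : VanishesOnOrthogonalPairs φ) {u : A}
    (hpq : p * q = 0) (hqp : q * p = 0) (hpu : p * u = u) (huq : u * q = u) :
    φ u p = φ q u := by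
  have hqu : q * u = 0 := by rw [← hpu, ← mul_assoc, hqp, zero_mul]
  have hup : u * p = 0 := by rw [← huq, mul_assoc, hqp, mul_zero]
  have huu : u * u = 0 := by rw [← huq, mul_assoc, huq, hqu, mul_zero]
  have hsum : φ (q - u) (p + u) = 0 := by
    apply hφ <;> simp [mul_add, add_mul, mul_sub, sub_mul, hpq, hqp, hpu, huq, hqu, hup, huu]
  have hsub : φ q u - φ u p = 0 := by simpa [hφ q p hqp hpq, hφ u u huu huu] using hsum
  exact (sub_eq_zero.mp hsub).symm

theorem apply_mul_left_of_mul_eq_zero (hφ : VanishesOnOrthogonalPairs φ)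
    (hp : IsIdempotentElem p) {b : A} (hbp : b * p = 0) : φ (p * b) p = φ b p := by
  have horth : φ (b - p * b) p = 0 :=
    hφ _ _ (by simp [sub_mul, mul_assoc, hbp]) (by simp [mul_sub, ← mul_assoc, hp.eq])
  rw [map_sub, LinearMap.sub_apply, sub_eq_zero] at horth
  exact horth.symm

theorem apply_mul_right_of_mul_eq_zero (hφ : VanishesOnOrthogonalPairs φ)
    (hp : IsIdempotentElem p) {b : A} (hpb : p * b = 0) : φ p (b * p) = φ p b := by
  have horth : φ p (b - b * p) = 0 :=
    hφ _ _ (by simp [mul_sub, ← mul_assoc, hpb]) (by simp [sub_mul, mul_assoc, hp.eq])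
  rw [map_sub, sub_eq_zero] at horth
  exact horth.symm

theorem apply_mul_eq_apply_mul_of_orthogonal (hφ : VanishesOnOrthogonalPairs φ)
    (hp : IsIdempotentElem p) (hq : IsIdempotentElem q) (hpq : p * q = 0) (hqp : q * p = 0)
    (a : A) : φ (a * q) p = φ q (p * a) :=
  calc
    φ (a * q) p = φ (p * (a * q)) p :=
      (hφ.apply_mul_left_of_mul_eq_zero hp (by rw [mul_assoc, hqp, mul_zero])).symm
    _ = φ q (p * (a * q)) :=
      hφ.apply_eq_apply_of_mem_corner hpq hqp (by rw [← mul_assoc, hp.eq])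
        (by simp only [mul_assoc, hq.eq])
    _ = φ q (p * a * q) := by rw [mul_assoc]
    _ = φ q (p * a) :=
      hφ.apply_mul_right_of_mul_eq_zero hq (by rw [← mul_assoc, hqp, zero_mul])

end NonUnital

section Unital

variable [Ring A] [Module R A] {φ : A →ₗ[R] A →ₗ[R] X} {p x : A}

theorem apply_one_comm_of_isIdempotentElem (hφ : VanishesOnOrthogonalPairs φ)
    (hp : IsIdempotentElem p) : φ p 1 = φ 1 p := by
  have hpq : φ p (1 - p) = 0 := hφ _ _ hp.mul_one_sub_self hp.one_sub_mul_self
  have hqp : φ (1 - p) p = 0 := hφ _ _ hp.one_sub_mul_self hp.mul_one_sub_self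
  rw [map_sub, sub_eq_zero] at hpq
  rw [map_sub, LinearMap.sub_apply, sub_eq_zero] at hqp
  rw [hpq, hqp]

theorem apply_add_apply_swap_of_isIdempotentElem (hφ : VanishesOnOrthogonalPairs φ)
    (hp : IsIdempotentElem p) (a : A) :
    φ a p + φ p a = φ (a * p) 1 + φ 1 (p * a) := by
  obtain ⟨q, hq⟩ : ∃ q, q = 1 - p := ⟨_, rfl⟩
  have hqq : IsIdempotentElem q := hq ▸ hp.one_sub
  have hpq : p * q = 0 := hq ▸ hp.mul_one_sub_self
  have hqp : q * p = 0 := hq ▸ hp.one_sub_mul_self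
  have hadd : p + q = 1 := hq ▸ add_sub_cancel p 1
  calc
    φ a p + φ p a = φ (a * p + a * q) p + φ p (p * a + q * a) := by
      rw [← mul_add, ← add_mul, hadd, mul_one, one_mul]
    _ = (φ (a * p) p + φ (a * q) p) + (φ p (p * a) + φ p (q * a)) := by
      rw [map_add, map_add, LinearMap.add_apply]
    _ = (φ (a * p) p + φ q (p * a)) + (φ p (p * a) + φ (a * p) q) := by
      rw [hφ.apply_mul_eq_apply_mul_of_orthogonal hp hqq hpq hqp,
        hφ.apply_mul_eq_apply_mul_of_orthogonal hqq hp hqp hpq]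
    _ = φ (a * p) (p + q) + φ (p + q) (p * a) := by
      rw [map_add, map_add, LinearMap.add_apply]
      abel
    _ = φ (a * p) 1 + φ 1 (p * a) := by rw [hadd]

theorem apply_one_comm_of_mem_span (hφ : VanishesOnOrthogonalPairs φ)
    (hx : x ∈ Submodule.span R {p : A | IsIdempotentElem p}) : φ x 1 = φ 1 x :=
  LinearMap.eqOn_span (f := φ.flip 1) (g := φ 1)
    (fun _ hp ↦ hφ.apply_one_comm_of_isIdempotentElem hp) hx

theorem apply_add_apply_swap_of_mem_span [SMulCommClass R A A] [IsScalarTower R A A]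
    (hφ : VanishesOnOrthogonalPairs φ) (a : A)
    (hx : x ∈ Submodule.span R {p : A | IsIdempotentElem p}) :
    φ a x + φ x a = φ (a * x) 1 + φ 1 (x * a) :=
  LinearMap.eqOn_span (f := φ a + φ.flip a)
    (g := φ.flip 1 ∘ₗ LinearMap.mulLeft R a + φ 1 ∘ₗ LinearMap.mulRight R a)
    (fun _ hp ↦ hφ.apply_add_apply_swap_of_isIdempotentElem hp a) hx

end Unital

end VanishesOnOrthogonalPairs

theorem continuous_bilinear_condition_G_closure_span_idempotents_general
    [Ring A] [Algebra R A] [TopologicalSpace A] [SeparatelyContinuousMul A]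
    [TopologicalSpace X] [ContinuousAdd X] [T2Space X] (φ : A →ₗ[R] A →ₗ[R] X)
    (hleft : ∀ b, Continuous fun a ↦ φ a b) (hright : ∀ a, Continuous (φ a))
    (hφ : VanishesOnOrthogonalPairs φ) :
    (∀ a : A, ∀ x ∈ closure (Submodule.span R {p : A | IsIdempotentElem p} : Set A),
      φ a x + φ x a = φ (a * x) 1 + φ 1 (x * a) ∧ φ x 1 = φ 1 x) ∧
    (closure (Submodule.span R {p : A | IsIdempotentElem p} : Set A) = Set.univ →
      ∀ a b : A, (φ a b + φ b a = φ (a * b) 1 + φ 1 (b * a)) ∧ φ a 1 = φ 1 a) := by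
  have hclosure (a x : A)
      (hx : x ∈ closure (Submodule.span R {p : A | IsIdempotentElem p} : Set A)) :
      φ a x + φ x a = φ (a * x) 1 + φ 1 (x * a) ∧ φ x 1 = φ 1 x := by
    constructor
    · exact Set.EqOn.closure (fun _ ↦ hφ.apply_add_apply_swap_of_mem_span a)
        ((hright a).add (hleft a))
        (((hleft 1).comp (continuous_const_mul a)).add
          ((hright 1).comp (continuous_mul_const a))) hx
    · exact Set.EqOn.closure (fun _ ↦ hφ.apply_one_comm_of_mem_span) (hleft 1) (hright 1) hx
  refine ⟨hclosure, fun htop a b ↦ ?_⟩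
  have hmem (x : A) : x ∈ closure (Submodule.span R {p : A | IsIdempotentElem p} : Set A) :=
    htop ▸ Set.mem_univ x
  exact ⟨(hclosure a b (hmem b)).1, (hclosure b a (hmem a)).2⟩

end Bilinear

/-- Corollary 3.6: continuous version of Theorem 3.5 for unital complex Banach algebras,
with `x` ranging over the norm closure of the span of idempotents, together with the
particular case where the algebra equals that closure. -/
theorem continuous_bilinear_condition_G_closure_span_idempotents
    {A X : Type*} [NormedRing A] [NormedAlgebra ℂ A] [CompleteSpace A]
    [NormedAddCommGroup X] [NormedSpace ℂ X] [CompleteSpace X]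
    (φ : A →L[ℂ] A →L[ℂ] X)
    (h : ∀ a b : A, a * b = 0 → b * a = 0 → φ a b = 0) :
    (∀ a : A, ∀ x ∈ closure ((Submodule.span ℂ {p : A | p * p = p} : Submodule ℂ A) : Set A),
      φ a x + φ x a = φ (a * x) 1 + φ 1 (x * a) ∧ φ x 1 = φ 1 x) ∧
    ((closure ((Submodule.span ℂ {p : A | p * p = p} : Submodule ℂ A) : Set A) = Set.univ) →
      ∀ a b : A, (φ a b + φ b a = φ (a * b) 1 + φ 1 (b * a)) ∧ φ a 1 = φ 1 a) :=
  continuous_bilinear_condition_G_closure_span_idempotents_general φ.toLinearMap₁₂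
    (fun b ↦ (φ.flip b).continuous) (fun a ↦ (φ a).continuous) h
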